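/- Let n and m be natural numbers with 1 ≤ m ≤ 2^n, and let θ = Real.arccos (Real.sqrt (m / 2^n)). Then 1 − θ/π ≥ 1/2 + 2^{−(⌈n/2⌉ + 3)}, where ⌈n/2⌉ denotes the ceiling of n/2 (in Lean, (n+1)/2). Equivalently, (2π − 2θ)/(2π) ≥ 1/2 + 1/2^{⌈n/2⌉+3}. -/

import Mathlib

theorem Real.self_le_arcsin {x : ℝ} (h0 : 0 ≤ x) (h1 : x ≤ 1) : x ≤ Real.arcsin x := by
  simpa only [Real.sin_arcsin (by linarith) h1] using Real.sin_le (Real.arcsin_nonneg.2 h0)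

theorem inv_two_pow_half_le_sqrt (n m : ℕ) (hm : 1 ≤ m) :
    1 / 2 ^ ((n + 1) / 2) ≤ Real.sqrt ((m : ℝ) / 2 ^ n) := by
  apply Real.le_sqrt_of_sq_le
  rw [div_pow, one_pow, ← pow_mul]
  have hm₁ : (1 : ℝ) ≤ m := by exact_mod_cast hm
  gcongr
  · norm_num
  · omega

/-- If a hyperplane misclassifies m ≥ 1 of the 2^n data points, then the
phase (2π − 2θ)/(2π) = 1 − θ/π exceeds 1/2 by at least 2^{−(⌈n/2⌉+3)}. -/
theorem misclassification_phase_gap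
    (n m : ℕ) (hm : 1 ≤ m) (hm' : m ≤ 2 ^ n)
    (θ : ℝ) (hθ : θ = Real.arccos (Real.sqrt ((m : ℝ) / 2 ^ n))) :
    1 - θ / Real.pi ≥ 1 / 2 + 1 / 2 ^ ((n + 1) / 2 + 3) := by
  have hx₁ : Real.sqrt ((m : ℝ) / 2 ^ n) ≤ 1 :=
    Real.sqrt_le_one.2 (div_le_one_of_le₀ (by exact_mod_cast hm') (by positivity))
  have hle := (inv_two_pow_half_le_sqrt n m hm).trans
    (Real.self_le_arcsin (Real.sqrt_nonneg _) hx₁)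
  have hphase : 1 - θ / Real.pi
      = 1 / 2 + Real.arcsin (Real.sqrt ((m : ℝ) / 2 ^ n)) / Real.pi := by
    rw [hθ, Real.arccos]
    field_simp
    ring
  have hgap : (1 : ℝ) / 2 ^ ((n + 1) / 2 + 3)
      ≤ Real.arcsin (Real.sqrt ((m : ℝ) / 2 ^ n)) / Real.pi := by
    calc (1 : ℝ) / 2 ^ ((n + 1) / 2 + 3) = 1 / 2 ^ ((n + 1) / 2) / 8 := by
          rw [pow_add, div_div]; norm_num
      _ ≤ 1 / 2 ^ ((n + 1) / 2) / Real.pi := by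
          gcongr
          linarith [Real.pi_le_four]
      _ ≤ _ := by gcongr
  rw [hphase]
  gcongr
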